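/- The cubic B-spline quasi-interpolant reproduces cubic polynomials: for every polynomial p of degree at most 3 and every x ∈ ℝ, Σ_{k∈ℤ} (1/6)(−p(k−1) + 8p(k) − p(k+1)) · B₃(x − (k−2)) = p(x). -/

import Mathlib

open MeasureTheory

/-- The cardinal B-spline of degree `d`: `B₀` is the indicator function of `[0,1)` and
`B_{d+1} = B_d * B₀` (convolution), so `B_d` is supported on `[0, d+1]`. -/
noncomputable def cardB : ℕ → ℝ → ℝ
  | 0 => Set.indicator (Set.Ico (0 : ℝ) 1) 1
  | (d + 1) => fun x => ∫ t : ℝ, cardB d (x - t) * cardB 0 t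


theorem tp_deriv (n : ℕ) (c x : ℝ) (hx : x ≠ c) :
    HasDerivAt (fun t : ℝ => (max (t - c) 0) ^ (n + 2) / ((n : ℝ) + 2)) ((max (x - c) 0) ^ (n + 1)) x := by
  rcases lt_or_gt_of_ne hx with h | h
  · have h1 : (fun t : ℝ => (max (t - c) 0) ^ (n + 2) / ((n : ℝ) + 2)) =ᶠ[nhds x] fun _ => (0 : ℝ) := by
      filter_upwards [Iio_mem_nhds h] with t ht
      have : t < c := ht
      rw [max_eq_right (by linarith)]; simp
    rw [max_eq_right (by linarith), zero_pow (by omega)]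
    exact (hasDerivAt_const x (0 : ℝ)).congr_of_eventuallyEq h1
  · have h1 : (fun t : ℝ => (max (t - c) 0) ^ (n + 2) / ((n : ℝ) + 2)) =ᶠ[nhds x]
        fun t => (t - c) ^ (n + 2) / ((n : ℝ) + 2) := by
      filter_upwards [Ioi_mem_nhds h] with t ht
      have : c < t := ht
      rw [max_eq_left (by linarith)]
    rw [max_eq_left (by linarith)]
    have h2 := ((((hasDerivAt_id x).sub_const c).pow (n + 2)).div_const ((n : ℝ) + 2))
    refine (h2.congr_of_eventuallyEq h1).congr_deriv ?_
    have : (n : ℝ) + 2 ≠ 0 := by positivity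
    simp
    field_simp

theorem tp_int (n : ℕ) (c a b : ℝ) :
    ∫ t in a..b, (max (t - c) 0) ^ (n + 1) =
      (max (b - c) 0) ^ (n + 2) / ((n : ℝ) + 2) - (max (a - c) 0) ^ (n + 2) / ((n : ℝ) + 2) := by
  refine integral_eq_of_hasDerivAt_off_countable
    (fun t : ℝ => (max (t - c) 0) ^ (n + 2) / ((n : ℝ) + 2)) _ (Set.countable_singleton c) ?_ ?_ ?_
  · fun_prop
  · intro x hx
    exact tp_deriv n c x hx.2
  · apply Continuous.intervalIntegrable
    fun_prop

theorem tp_ii (n : ℕ) (c a b : ℝ) :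
    IntervalIntegrable (fun t : ℝ => (max (t - c) 0) ^ (n + 1)) volume a b := by
  apply Continuous.intervalIntegrable
  fun_prop

theorem cardB_succ (d : ℕ) (x : ℝ) : cardB (d + 1) x = ∫ t in (x - 1)..x, cardB d t := by
  have h0 : cardB 0 = Set.indicator (Set.Ico (0 : ℝ) 1) 1 := by rw [cardB]
  have h : cardB (d + 1) x = ∫ t : ℝ, cardB d (x - t) * cardB 0 t := by conv_lhs => rw [cardB]
  have h1 : ∀ t, cardB d (x - t) * cardB 0 t
      = Set.indicator (Set.Ico (0 : ℝ) 1) (fun t => cardB d (x - t)) t := by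
    intro t
    rw [h0]
    by_cases ht : t ∈ Set.Ico (0 : ℝ) 1 <;> simp [ht]
  rw [h]
  simp_rw [h1]
  rw [integral_indicator measurableSet_Ico, integral_Ico_eq_integral_Ioc,
    ← intervalIntegral.integral_of_le zero_le_one,
    intervalIntegral.integral_comp_sub_left (fun t => cardB d t)]
  simp

theorem cardB_one (x : ℝ) : cardB 1 x
    = (max (x - 0) 0) ^ (0 + 1) - 2 * (max (x - 1) 0) ^ (0 + 1) + (max (x - 2) 0) ^ (0 + 1) := by
  rw [cardB_succ 0, intervalIntegral.integral_of_le (by linarith), ← integral_Ico_eq_integral_Ioc]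
  have h0 : cardB 0 = Set.indicator (Set.Ico (0 : ℝ) 1) 1 := by rw [cardB]
  rw [h0, setIntegral_indicator measurableSet_Ico, Set.Ico_inter_Ico]
  simp only [Pi.one_apply, integral_const, smul_eq_mul, mul_one, measureReal_restrict_apply_univ,
    Real.volume_real_Ico]
  grind

theorem cardB_two (x : ℝ) : cardB 2 x
    = 1 / 2 * (max (x - 0) 0) ^ (1 + 1) - 3 / 2 * (max (x - 1) 0) ^ (1 + 1)
      + 3 / 2 * (max (x - 2) 0) ^ (1 + 1) - 1 / 2 * (max (x - 3) 0) ^ (1 + 1) := by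
  rw [cardB_succ 1]
  simp_rw [cardB_one]
  have i := fun c => tp_ii 0 c (x - 1) x
  rw [intervalIntegral.integral_add ((i 0).sub ((i 1).const_mul 2)) (i 2),
    intervalIntegral.integral_sub (i 0) ((i 1).const_mul 2),
    intervalIntegral.integral_const_mul, tp_int, tp_int, tp_int]
  rw [show x - 1 - 0 = x - 1 by ring, show x - 1 - 1 = x - 2 by ring, show x - 1 - 2 = x - 3 by ring]
  push_cast
  ring

theorem cardB_three (x : ℝ) : cardB 3 x
    = 1 / 6 * ((max x 0) ^ 3 - 4 * (max (x - 1) 0) ^ 3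
      + 6 * (max (x - 2) 0) ^ 3 - 4 * (max (x - 3) 0) ^ 3 + (max (x - 4) 0) ^ 3) := by
  rw [cardB_succ 2]
  simp_rw [cardB_two]
  have i := fun c => tp_ii 1 c (x - 1) x
  rw [intervalIntegral.integral_sub ((((i 0).const_mul _).sub ((i 1).const_mul _)).add
      ((i 2).const_mul _)) ((i 3).const_mul _),
    intervalIntegral.integral_add (((i 0).const_mul _).sub ((i 1).const_mul _)) ((i 2).const_mul _),
    intervalIntegral.integral_sub ((i 0).const_mul _) ((i 1).const_mul _)]
  simp only [intervalIntegral.integral_const_mul]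
  rw [tp_int, tp_int, tp_int, tp_int]
  rw [show x - 1 - 0 = x - 1 by ring, show x - 1 - 1 = x - 2 by ring,
    show x - 1 - 2 = x - 3 by ring, show x - 1 - 3 = x - 4 by ring, sub_zero]
  push_cast
  ring

theorem cardB_three_zero (x : ℝ) (h : x ≤ 0 ∨ 4 ≤ x) : cardB 3 x = 0 := by
  rw [cardB_three]
  rcases h with h | h
  · rw [max_eq_right h, max_eq_right (by linarith), max_eq_right (by linarith),
      max_eq_right (by linarith), max_eq_right (by linarith)]
    ring
  · rw [max_eq_left (by linarith), max_eq_left (by linarith), max_eq_left (by linarith),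
      max_eq_left (by linarith), max_eq_left (by linarith)]
    ring

/-- The cubic B-spline quasi-interpolant reproduces cubic polynomials. -/
theorem cbsqi_reproduces_cubics (p : Polynomial ℝ) (hp : p.degree ≤ 3) (x : ℝ) :
    ∑' k : ℤ, (1 / 6 : ℝ) * (-(p.eval ((k : ℝ) - 1)) + 8 * p.eval (k : ℝ)
        - p.eval ((k : ℝ) + 1)) * cardB 3 (x - ((k : ℝ) - 2)) = p.eval x := by
  obtain ⟨a, b, c, d, hev⟩ : ∃ a b c d : ℝ, ∀ y, p.eval y = a + b * y + c * y ^ 2 + d * y ^ 3 := by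
    refine ⟨p.coeff 0, p.coeff 1, p.coeff 2, p.coeff 3, fun y => ?_⟩
    have hn : p.natDegree < 4 := by
      have : p.natDegree ≤ 3 := Polynomial.natDegree_le_of_degree_le hp
      omega
    rw [Polynomial.eval_eq_sum_range' hn]
    simp [Finset.sum_range_succ]
  simp_rw [hev]
  obtain ⟨n, u, hu0, hu1, rfl⟩ : ∃ (n : ℤ) (u : ℝ), 0 ≤ u ∧ u < 1 ∧ x = n + u :=
    ⟨⌊x⌋, Int.fract x, Int.fract_nonneg x, Int.fract_lt_one x, (Int.floor_add_fract x).symm⟩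
  rw [tsum_eq_sum (s := {n - 1, n, n + 1, n + 2})]
  · rw [Finset.sum_insert (by simp; omega), Finset.sum_insert (by simp),
      Finset.sum_insert (by simp), Finset.sum_singleton]
    push_cast
    have e1 : cardB 3 ((n : ℝ) + u - ((n : ℝ) - 1 - 2)) = 1 / 6 * (1 - u) ^ 3 := by
      rw [show (n : ℝ) + u - ((n : ℝ) - 1 - 2) = u + 3 by ring, cardB_three,
        max_eq_left (by linarith), max_eq_left (by linarith), max_eq_left (by linarith),
        max_eq_left (by linarith), max_eq_right (by linarith)]
      ring
    have e2 : cardB 3 ((n : ℝ) + u - ((n : ℝ) - 2)) = 1 / 6 * (3 * u ^ 3 - 6 * u ^ 2 + 4) := by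
      rw [show (n : ℝ) + u - ((n : ℝ) - 2) = u + 2 by ring, cardB_three,
        max_eq_left (by linarith), max_eq_left (by linarith), max_eq_left (by linarith),
        max_eq_right (by linarith), max_eq_right (by linarith)]
      ring
    have e3 : cardB 3 ((n : ℝ) + u - ((n : ℝ) + 1 - 2))
        = 1 / 6 * (-3 * u ^ 3 + 3 * u ^ 2 + 3 * u + 1) := by
      rw [show (n : ℝ) + u - ((n : ℝ) + 1 - 2) = u + 1 by ring, cardB_three,
        max_eq_left (by linarith), max_eq_left (by linarith), max_eq_right (by linarith),
        max_eq_right (by linarith), max_eq_right (by linarith)]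
      ring
    have e4 : cardB 3 ((n : ℝ) + u - ((n : ℝ) + 2 - 2)) = 1 / 6 * u ^ 3 := by
      rw [show (n : ℝ) + u - ((n : ℝ) + 2 - 2) = u by ring, cardB_three,
        max_eq_left (by linarith), max_eq_right (by linarith), max_eq_right (by linarith),
        max_eq_right (by linarith), max_eq_right (by linarith)]
      ring
    rw [e1, e2, e3, e4]
    ring
  · intro k hk
    have hk' : k ≤ n - 2 ∨ n + 3 ≤ k := by
      simp only [Finset.mem_insert, Finset.mem_singleton] at hk
      omega
    rw [cardB_three_zero, mul_zero]
    rcases hk' with h | h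
    · right
      have : (k : ℝ) ≤ n - 2 := by exact_mod_cast h
      linarith
    · left
      have : (n : ℝ) + 3 ≤ k := by exact_mod_cast h
      linarith
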